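/- Let G be a connected graph of genus g = |E(G)| − |V(G)| + 1, possibly with loops, and let K#_G := Σ_{v∈V(G)} (val(v) − 2) v be its canonical divisor. Then deg K#_G = 2g − 2 and r#_G(K#_G) = g − 1. -/

import Mathlib

/-- A finite multigraph: vertices `V`, edges `E`, each edge has an (arbitrarily
ordered) pair of endpoints.  Loops are edges whose two endpoints coincide. -/
structure Multigraph where
  V : Type
  E : Type
  [decV : DecidableEq V]
  [fintV : Fintype V]
  [decE : DecidableEq E]
  [fintE : Fintype E]
  ends : E → V × V

attribute [instance] Multigraph.decV Multigraph.fintV Multigraph.decE Multigraph.fintE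

namespace Multigraph

variable (G : Multigraph)

/-- Two vertices are adjacent if some edge joins them. -/
def Adj (v w : G.V) : Prop := ∃ e : G.E, G.ends e = (v, w) ∨ G.ends e = (w, v)

/-- A multigraph is connected if it is nonempty and any two vertices are joined by a walk. -/
def Connected : Prop := Nonempty G.V ∧ ∀ v w : G.V, Relation.ReflTransGen G.Adj v w

/-- The number of edges joining `v` and `w`. -/
def numEdges (v w : G.V) : ℕ :=
  (Finset.univ.filter fun e : G.E => G.ends e = (v, w) ∨ G.ends e = (w, v)).card

/-- The number of loops based at `v`. -/
def numLoops (v : G.V) : ℕ :=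
  (Finset.univ.filter fun e : G.E => G.ends e = (v, v)).card

/-- The valency of `v` (loops count twice). -/
def valency (v : G.V) : ℕ :=
  ∑ e : G.E, ((if (G.ends e).1 = v then 1 else 0) + (if (G.ends e).2 = v then 1 else 0))

/-- The intersection product on vertices: `(v·w)` is the number of edges joining `v` and
`w` when `v ≠ w`, and `(v·v) = -val(v) + 2 loop(v)`. -/
def inter (v w : G.V) : ℤ :=
  if v = w then -(G.valency v : ℤ) + 2 * (G.numLoops v : ℤ) else (G.numEdges v w : ℤ)

/-- The principal divisor `T_v = Σ_w (v·w) w`. -/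
def T (v : G.V) : G.V → ℤ := fun w => G.inter v w

/-- The group of principal divisors, generated by the `T_v`. -/
def Prin : AddSubgroup (G.V → ℤ) := AddSubgroup.closure (Set.range G.T)

/-- The Jacobian group `Div(G)/Prin(G)`. -/
abbrev Jac := (G.V → ℤ) ⧸ G.Prin

/-- A divisor is effective if all its coefficients are nonnegative. -/
def Effective {α : Type} (D : α → ℤ) : Prop := ∀ v, 0 ≤ D v

/-- The degree of a divisor. -/
def degree {α : Type} [Fintype α] (D : α → ℤ) : ℤ := ∑ v, D v

/-- The Baker–Norine rank of a divisor: `-1` if no effective divisor is linearly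
equivalent to `D`, and otherwise the largest `k ≥ 0` such that for every effective
divisor `E` of degree `k` some effective divisor is linearly equivalent to `D - E`. -/
noncomputable def rank (D : G.V → ℤ) : ℤ :=
  sSup {r : ℤ | r = -1 ∨ (0 ≤ r ∧ ∀ E : G.V → ℤ, Effective E → degree E = r →
      ∃ F : G.V → ℤ, Effective F ∧ D - E - F ∈ G.Prin)}

/-- An edge is a loop if its two endpoints coincide. -/
def IsLoop (e : G.E) : Prop := (G.ends e).1 = (G.ends e).2

/-- The refinement of `G` obtained by inserting `n e` new vertices in the interior of
each edge `e` (subdividing `e` into `n e + 1` edges). -/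
def subdivide (n : G.E → ℕ) : Multigraph where
  V := G.V ⊕ (Σ e : G.E, Fin (n e))
  E := Σ e : G.E, Fin (n e + 1)
  ends := fun x =>
    (if h : (x.2 : ℕ) = 0 then Sum.inl (G.ends x.1).1
        else Sum.inr ⟨x.1, ⟨(x.2 : ℕ) - 1, by have := x.2.isLt; omega⟩⟩,
     if h : (x.2 : ℕ) = n x.1 then Sum.inl (G.ends x.1).2
        else Sum.inr ⟨x.1, ⟨(x.2 : ℕ), by have := x.2.isLt; omega⟩⟩)

/-- The natural map `σ* : Div(G) → Div(G̃)` to a refinement, extending a divisor by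
zero on the new vertices. -/
def subdivMap (n : G.E → ℕ) (D : G.V → ℤ) : (G.subdivide n).V → ℤ := Sum.elim D 0

/-- `Ĝ`: the loopless refinement obtained by inserting one new vertex in the interior of
every loop-edge. -/
def hat : Multigraph := G.subdivide fun e => if (G.ends e).1 = (G.ends e).2 then 1 else 0

/-- The rank `r#_G(D) := r_{Ĝ}(σ* D)`. -/
noncomputable def rankSharp (D : G.V → ℤ) : ℤ :=
  G.hat.rank (G.subdivMap (fun e => if (G.ends e).1 = (G.ends e).2 then 1 else 0) D)

/-- A multigraph is loopless if no edge is a loop. -/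
def Loopless : Prop := ∀ e : G.E, (G.ends e).1 ≠ (G.ends e).2

/-- The genus (first Betti number) `g = |E| - |V| + 1` of a connected graph. -/
def genus : ℤ := (Fintype.card G.E : ℤ) - (Fintype.card G.V : ℤ) + 1

/-- The canonical divisor `K#_G = Σ_v (val(v) - 2) v`. -/
def canonical : G.V → ℤ := fun v => (G.valency v : ℤ) - 2

/-- The loopless graph obtained from `G` by removing all loop-edges. -/
def removeLoops : Multigraph where
  V := G.V
  E := {e : G.E // (G.ends e).1 ≠ (G.ends e).2}
  ends := fun e => G.ends e.1

/-- The virtual graph `G^ω` of a weighted graph `(G, ω)`: attach `ω v` loops at each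
vertex `v`. -/
def virt (w : G.V → ℕ) : Multigraph where
  V := G.V
  E := G.E ⊕ (Σ v : G.V, Fin (w v))
  ends := Sum.elim G.ends fun p => (p.1, p.1)

/-- The rank of a divisor on the weighted graph `(G, ω)`: `r_{(G,ω)}(D) := r#_{G^ω}(D)`. -/
noncomputable def rankW (w : G.V → ℕ) (D : G.V → ℤ) : ℤ := (G.virt w).rankSharp D

/-- The canonical divisor of the weighted graph `(G, ω)`. -/
def canonicalW (w : G.V → ℕ) : G.V → ℤ := fun v => (G.valency v : ℤ) + 2 * (w v : ℤ) - 2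

/-- The genus of the weighted graph `(G, ω)`: `b₁(G) + Σ_v ω(v)`. -/
def genusW (w : G.V → ℕ) : ℤ := G.genus + ∑ v, (w v : ℤ)

/-- The rose `R_g`: one vertex and `g` loop-edges. -/
def rose (g : ℕ) : Multigraph where
  V := Unit
  E := Fin g
  ends := fun _ => ((), ())

/-- The subgraph of `G` determined by a set of vertices and a set of edges with
endpoints among them. -/
def subgraph (Vs : Finset G.V) (Es : Finset G.E)
    (h : ∀ e ∈ Es, (G.ends e).1 ∈ Vs ∧ (G.ends e).2 ∈ Vs) : Multigraph where
  V := {x : G.V // x ∈ Vs}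
  E := {e : G.E // e ∈ Es}
  ends := fun e => (⟨(G.ends e.1).1, (h e.1 e.2).1⟩, ⟨(G.ends e.1).2, (h e.1 e.2).2⟩)

/-- Extension of a divisor on a subgraph by zero: `ι_* : Div(H) → Div(G)`. -/
def iota (Vs : Finset G.V) (D : {x : G.V // x ∈ Vs} → ℤ) : G.V → ℤ :=
  fun x => if h : x ∈ Vs then D ⟨x, h⟩ else 0

end Multigraph

namespace Multigraph

/-- A decomposition `G = H₁ ∨ H₂` of `G` associated to a cut vertex `v`:  `H₁`, `H₂` are
connected subgraphs with `V(H₁) ∩ V(H₂) = {v}`, `E(H₁) ∩ E(H₂) = ∅`, covering `G`. -/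
structure Wedge (G : Multigraph) where
  v : G.V
  V1 : Finset G.V
  V2 : Finset G.V
  hv1 : v ∈ V1
  hv2 : v ∈ V2
  E1 : Finset G.E
  E2 : Finset G.E
  cover_V : V1 ∪ V2 = Finset.univ
  inter_V : V1 ∩ V2 = {v}
  cover_E : E1 ∪ E2 = Finset.univ
  disj_E : E1 ∩ E2 = ∅
  ends1 : ∀ e ∈ E1, (G.ends e).1 ∈ V1 ∧ (G.ends e).2 ∈ V1
  ends2 : ∀ e ∈ E2, (G.ends e).1 ∈ V2 ∧ (G.ends e).2 ∈ V2
  conn1 : (G.subgraph V1 E1 ends1).Connected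
  conn2 : (G.subgraph V2 E2 ends2).Connected

/-- The first subgraph `H₁` of a wedge decomposition. -/
def Wedge.H1 {G : Multigraph} (W : G.Wedge) : Multigraph := G.subgraph W.V1 W.E1 W.ends1

/-- The second subgraph `H₂` of a wedge decomposition. -/
def Wedge.H2 {G : Multigraph} (W : G.Wedge) : Multigraph := G.subgraph W.V2 W.E2 W.ends2

variable (G : Multigraph)

/-- The divisor `div(f)` of an integer-valued function `f` on the vertices
(loops contribute zero). -/
def divOf (f : G.V → ℤ) : G.V → ℤ := fun v =>
  ∑ e : G.E, ((if (G.ends e).1 = v then f v - f (G.ends e).2 else 0)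
            + (if (G.ends e).2 = v then f v - f (G.ends e).1 else 0))

/-- An isomorphism of multigraphs (edges may be matched with either orientation). -/
structure Iso (G H : Multigraph) where
  vEquiv : G.V ≃ H.V
  eEquiv : G.E ≃ H.E
  compat : ∀ e : G.E,
    H.ends (eEquiv e) = (vEquiv (G.ends e).1, vEquiv (G.ends e).2) ∨
    H.ends (eEquiv e) = (vEquiv (G.ends e).2, vEquiv (G.ends e).1)

end Multigraph

namespace BNCore
open Finset
set_option linter.unusedSectionVars false
variable {V : Type} [Fintype V] [DecidableEq V]

/-- Laplacian. -/
def L (a : V → V → ℤ) (f : V → ℤ) (v : V) : ℤ := ∑ w, a v w * (f w - f v)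

/-- Orientation divisor. -/
def nu (a : V → V → ℤ) (ρ : V → ℤ) (v : V) : ℤ := (∑ w, if ρ w < ρ v then a v w else 0) - 1

lemma nu_unwin [Nonempty V] (a : V → V → ℤ) (ha : ∀ v w, 0 ≤ a v w) (ρ f : V → ℤ) :
    ∃ v, nu a ρ v + L a f v < 0 := by
  obtain ⟨v0, -, hv0⟩ := exists_max_image (univ : Finset V) f univ_nonempty
  obtain ⟨v, hv, hmin⟩ := exists_min_image (univ.filter fun v => f v = f v0) ρ ⟨v0, by simp⟩
  simp only [mem_filter, mem_univ, true_and] at hv hmin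
  refine ⟨v, ?_⟩
  have : (∑ w, if ρ w < ρ v then a v w else 0) + L a f v ≤ 0 := by
    unfold L
    rw [← sum_add_distrib]
    apply sum_nonpos
    intro w _
    have h1 := hv0 w (mem_univ w)
    have h2 := ha v w
    split_ifs with h
    · have : f w ≠ f v0 := fun h' => absurd (hmin w h') (by omega)
      have : f w - f v ≤ -1 := by omega
      nlinarith
    · have : f w - f v ≤ 0 := by omega
      nlinarith
  unfold nu
  omega

lemma sum_L (a : V → V → ℤ) (hs : ∀ v w, a v w = a w v) (f : V → ℤ) : ∑ v, L a f v = 0 := by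
  have h : ∑ v, L a f v = - ∑ v, L a f v := by
    conv_lhs => unfold L; rw [sum_comm]
    unfold L
    rw [← sum_neg_distrib]
    refine sum_congr rfl fun v _ => ?_
    rw [← sum_neg_distrib]
    refine sum_congr rfl fun w _ => ?_
    rw [hs w v]; ring
  omega

lemma nu_add (a : V → V → ℤ) (hd : ∀ v, a v v = 0) (ρ : V → ℤ)
    (hρ : Function.Injective ρ) (v : V) :
    nu a ρ v + nu a (fun v => - ρ v) v = (∑ w, a v w) - 2 := by
  unfold nu
  have : (∑ w, if ρ w < ρ v then a v w else 0) + (∑ w, if - ρ w < - ρ v then a v w else 0)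
      = ∑ w, a v w := by
    rw [← sum_add_distrib]
    refine sum_congr rfl fun w _ => ?_
    rcases lt_trichotomy (ρ w) (ρ v) with h | h | h
    · rw [if_pos h, if_neg (by omega)]; simp
    · have := hρ h; subst this; simp [hd]
    · rw [if_neg (by omega), if_pos (by omega)]; simp
  simp only
  omega

lemma sum_nu (a : V → V → ℤ) (hs : ∀ v w, a v w = a w v) (hd : ∀ v, a v v = 0) (ρ : V → ℤ)
    (hρ : Function.Injective ρ) :
    2 * ∑ v, nu a ρ v = (∑ v, ∑ w, a v w) - 2 * Fintype.card V := by
  have h1 : ∑ v, nu a ρ v = ∑ v, nu a (fun v => - ρ v) v := by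
    unfold nu
    rw [sum_sub_distrib, sum_sub_distrib, sum_comm]
    congr 1
    refine sum_congr rfl fun v _ => sum_congr rfl fun w _ => ?_
    rw [hs w v]
    simp
  have h2 : ∑ v, nu a ρ v + ∑ v, nu a (fun v => - ρ v) v = ∑ v, ((∑ w, a v w) - 2) := by
    rw [← sum_add_distrib]
    exact sum_congr rfl fun v _ => nu_add a hd ρ hρ v
  rw [sum_sub_distrib] at h2
  simp at h2
  omega

lemma burn (a : V → V → ℤ) (D : V → ℤ) (q : V) (hq : D q ≤ -1)
    (h : ∀ U : Finset V, q ∈ U → U ≠ univ → ∃ v, v ∉ U ∧ D v + 1 ≤ ∑ w ∈ U, a v w) :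
    ∃ ρ : V → ℕ, Function.Injective ρ ∧ ∀ v, D v ≤ nu a (fun v => (ρ v : ℤ)) v := by
  have key : ∀ n : ℕ, n + 1 ≤ Fintype.card V → ∃ U : Finset V, U.card = n + 1 ∧ q ∈ U ∧
      ∃ ρ : V → ℕ, Set.InjOn ρ U ∧ (∀ v ∈ U, ρ v < n + 1) ∧
        ∀ v ∈ U, D v + 1 ≤ ∑ w ∈ U, if ρ w < ρ v then a v w else 0 := by
    intro n
    induction n with
    | zero =>
      intro _
      refine ⟨{q}, by simp, by simp, fun _ => 0, by simp, by simp, ?_⟩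
      intro v hv
      simp at hv
      subst hv
      simp; omega
    | succ n ih =>
      intro hn
      obtain ⟨U, hU, hqU, ρ, hinj, hlt, hρ⟩ := ih (by omega)
      obtain ⟨v, hv, hvD⟩ := h U hqU (by rintro rfl; rw [card_univ] at hU; omega)
      have hne : ∀ w ∈ U, w ≠ v := fun w hw h => hv (h ▸ hw)
      refine ⟨insert v U, by rw [card_insert_of_notMem hv, hU], by simp [hqU],
        Function.update ρ v (n+1), ?_, ?_, ?_⟩
      · intro x hx y hy hxy
        simp only [coe_insert, Set.mem_insert_iff, mem_coe] at hx hy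
        rcases hx with rfl | hx <;> rcases hy with rfl | hy
        · rfl
        · rw [Function.update_self, Function.update_of_ne (hne y hy)] at hxy
          have := hlt y hy; omega
        · rw [Function.update_self, Function.update_of_ne (hne x hx)] at hxy
          have := hlt x hx; omega
        · rw [Function.update_of_ne (hne y hy), Function.update_of_ne (hne x hx)] at hxy
          exact hinj hx hy hxy
      · intro x hx
        rcases mem_insert.1 hx with rfl | hx
        · simp
        · rw [Function.update_of_ne (hne x hx)]; have := hlt x hx; omega
      · intro x hx
        rw [sum_insert hv]
        rcases mem_insert.1 hx with rfl | hx
        · simp only [lt_irrefl, if_false, zero_add]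
          refine hvD.trans (le_of_eq (sum_congr rfl fun w hw => ?_))
          rw [if_pos]
          rw [Function.update_self, Function.update_of_ne (hne w hw)]; exact hlt w hw
        · rw [Function.update_self, Function.update_of_ne (hne x hx),
            if_neg (by have := hlt x hx; omega), zero_add]
          refine (hρ x hx).trans (le_of_eq (sum_congr rfl fun w hw => ?_))
          rw [Function.update_of_ne (hne w hw)]
  have hc : 0 < Fintype.card V := Fintype.card_pos_iff.2 ⟨q⟩
  obtain ⟨U, hU, -, ρ, hinj, -, hρ⟩ := key (Fintype.card V - 1) (by omega)
  have : U = univ := by rw [← card_eq_iff_eq_univ]; omega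
  subst this
  refine ⟨ρ, by simpa using hinj, fun v => ?_⟩
  have := hρ v (mem_univ v)
  unfold nu
  simp only [Nat.cast_lt]
  omega

lemma exists_cross (a : V → V → ℤ) (hs : ∀ v w, a v w = a w v)
    (hc : ∀ v w, Relation.ReflTransGen (fun x y => 0 < a x y) v w)
    (U : Finset V) (q : V) (hq : q ∈ U) (hU : U ≠ univ) : ∃ v, v ∉ U ∧ ∃ w ∈ U, 0 < a v w := by
  by_contra! hcon
  apply hU
  rw [eq_univ_iff_forall]
  intro x
  induction hc q x with
  | refl => exact hq
  | tail _ hbc ih =>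
    by_contra hcc
    have := hcon _ hcc _ ih
    rw [hs] at this
    omega

lemma bfs (a : V → V → ℤ) (ha : ∀ v w, 0 ≤ a v w) (hs : ∀ v w, a v w = a w v)
    (hc : ∀ v w, Relation.ReflTransGen (fun x y => 0 < a x y) v w) (q : V) :
    ∃ ρ : V → ℕ, Function.Injective ρ ∧
      ∀ v, (if v = q then -1 else 0) ≤ nu a (fun v => (ρ v : ℤ)) v := by
  apply burn a (fun v => if v = q then -1 else 0) q (by simp)
  intro U hq hU
  obtain ⟨v, hv, w, hw, hvw⟩ := exists_cross a hs hc U q hq hU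
  refine ⟨v, hv, ?_⟩
  have : v ≠ q := by rintro rfl; exact hv hq
  simp only [this, if_false]
  have := single_le_sum (f := fun w => a v w) (fun w _ => ha v w) hw
  omega

lemma exists_good (a : V → V → ℤ) (ha : ∀ v w, 0 ≤ a v w) (hs : ∀ v w, a v w = a w v)
    (hc : ∀ v w, Relation.ReflTransGen (fun x y => 0 < a x y) v w) (q : V) (D : V → ℤ) :
    ∃ f : V → ℤ, ∀ v, v ≠ q → 0 ≤ D v + L a f v := by
  obtain ⟨ρ, -, hρ⟩ := bfs a ha hs hc q
  set C := ∑ v, |D v|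
  set d := ∑ v, ∑ w, a v w
  set N := ∑ v, ρ v
  have hC : ∀ v, |D v| ≤ C := fun v =>
    single_le_sum (f := fun v => |D v|) (fun w _ => abs_nonneg _) (mem_univ v)
  have hd : ∀ v, ∑ w, a v w ≤ d := fun v =>
    single_le_sum (f := fun v => ∑ w, a v w) (fun w _ => sum_nonneg fun _ _ => ha _ _) (mem_univ v)
  have hN : ∀ v, ρ v ≤ N := fun v =>
    single_le_sum (f := fun v => ρ v) (fun w _ => Nat.zero_le _) (mem_univ v)
  have hd0 : 0 ≤ d := sum_nonneg fun _ _ => sum_nonneg fun _ _ => ha _ _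
  have hC0 : 0 ≤ C := sum_nonneg fun _ _ => abs_nonneg _
  set h : V → ℤ := fun v => C * (d + 2) ^ (N - ρ v) with hh
  have hh0 : ∀ v, C ≤ h v := fun v => by
    have : (1 : ℤ) ≤ (d+2)^(N - ρ v) := one_le_pow₀ (by omega)
    simp only [hh]; nlinarith
  refine ⟨h, fun v hv => ?_⟩
  have h1 := hρ v
  simp only [hv, if_false, nu, Nat.cast_lt] at h1
  obtain ⟨w, -, hw⟩ : ∃ w ∈ univ, 0 < (if ρ w < ρ v then a v w else 0) := by
    by_contra! hcon
    have := sum_nonpos hcon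
    omega
  split_ifs at hw with hlt
  swap
  · omega
  have h2 : (d+2) * h v ≤ h w := by
    have e1 : N - ρ w ≥ (N - ρ v) + 1 := by have := hN v; omega
    have : (d+2)^((N - ρ v)+1) ≤ (d+2)^(N - ρ w) := pow_le_pow_right₀ (by omega) e1
    rw [pow_succ] at this
    simp only [hh]; nlinarith
  have h3 : L a h v = (∑ w, a v w * h w) - (∑ w, a v w) * h v := by
    unfold L; rw [sum_mul, ← sum_sub_distrib]
    exact sum_congr rfl fun w _ => by ring
  have h4 : a v w * h w ≤ ∑ w, a v w * h w :=
    single_le_sum (f := fun w => a v w * h w)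
      (fun x _ => mul_nonneg (ha v x) (hC0.trans (hh0 x))) (mem_univ w)
  have h5 := hh0 v
  have h6 := hh0 w
  have h7 : h w ≤ a v w * h w := by nlinarith
  have h8 : (∑ w, a v w) * h v ≤ d * h v := mul_le_mul_of_nonneg_right (hd v) (by omega)
  have h9 := neg_abs_le (D v)
  have h10 := hC v
  nlinarith

lemma bounded (a : V → V → ℤ) (ha : ∀ v w, 0 ≤ a v w)
    (hc : ∀ v w, Relation.ReflTransGen (fun x y => 0 < a x y) v w) (q : V) (D : V → ℤ) (v0 : V) :
    ∃ C : ℤ, ∀ f : V → ℤ, (∀ v, v ≠ q → 0 ≤ D v + L a f v) → (∀ w, f w ≤ f v0) →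
      f v0 - f q ≤ C := by
  have key : ∀ v, ∃ C : ℤ, 0 ≤ C ∧ ∀ f : V → ℤ, (∀ v, v ≠ q → 0 ≤ D v + L a f v) →
      (∀ w, f w ≤ f v0) → f v0 - f v ≤ C ∨ f v0 - f q ≤ C := by
    intro v
    induction hc v0 v with
    | refl => exact ⟨0, le_rfl, fun f _ _ => Or.inl (by omega)⟩
    | @tail v w _ hvw ih =>
      obtain ⟨C, hC0, hC⟩ := ih
      have hd0 : 0 ≤ ∑ x, a v x := sum_nonneg fun _ _ => ha _ _
      have hp := mul_nonneg hd0 hC0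
      refine ⟨C + |D v| + (∑ x, a v x) * C, by positivity, fun f h1 h2 => ?_⟩
      have hD := abs_nonneg (D v)
      have hD' := le_abs_self (D v)
      rcases hC f h1 h2 with h | h
      swap
      · right; omega
      by_cases hvq : v = q
      · subst hvq; right; omega
      left
      have h3 := h1 v hvq
      have h4 : L a f v ≤ a v w * (f w - f v) + (∑ x, a v x) * C := by
        unfold L
        rw [← add_sum_erase _ _ (mem_univ w)]
        have : ∑ x ∈ univ.erase w, a v x * (f x - f v) ≤ ∑ x ∈ univ.erase w, a v x * C := by
          refine sum_le_sum fun x _ => mul_le_mul_of_nonneg_left ?_ (ha v x)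
          have := h2 x; omega
        have h' : ∑ x ∈ univ.erase w, a v x * C ≤ (∑ x, a v x) * C := by
          rw [sum_mul]
          exact sum_le_sum_of_subset_of_nonneg (subset_univ _)
            fun x _ _ => mul_nonneg (ha v x) hC0
        linarith
      by_cases hfw : f v ≤ f w
      · omega
      · have : f v - f w ≤ a v w * (f v - f w) := by nlinarith
        nlinarith
  obtain ⟨C, -, h⟩ := key q
  exact ⟨C, fun f h1 h2 => by simpa using h f h1 h2⟩

lemma exists_reduced (a : V → V → ℤ) (ha : ∀ v w, 0 ≤ a v w) (hs : ∀ v w, a v w = a w v)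
    (hc : ∀ v w, Relation.ReflTransGen (fun x y => 0 < a x y) v w) (q : V) (D : V → ℤ) :
    ∃ f : V → ℤ, (∀ v, v ≠ q → 0 ≤ D v + L a f v) ∧
      ∀ U : Finset V, q ∈ U → U ≠ univ → ∃ v, v ∉ U ∧ D v + L a f v + 1 ≤ ∑ w ∈ U, a v w := by
  obtain ⟨f0, hf0⟩ := exists_good a ha hs hc q D
  choose C hC using bounded a ha hc q D
  have hV : (univ : Finset V).Nonempty := ⟨q, mem_univ q⟩
  obtain ⟨s, ⟨f, ⟨hfq, hf⟩, rfl⟩, hmax⟩ := Int.exists_greatest_of_bdd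
    (P := fun s => ∃ f : V → ℤ, (f q = f0 q ∧ ∀ v, v ≠ q → 0 ≤ D v + L a f v) ∧ ∑ v, f v = s)
    (by
      refine ⟨∑ _v : V, (f0 q + ∑ x, |C x|), ?_⟩
      rintro s ⟨f, ⟨h1, h2⟩, rfl⟩
      obtain ⟨v0, -, hv0⟩ := exists_max_image (univ : Finset V) f hV
      refine sum_le_sum fun v _ => ?_
      have h3 := hC v0 f h2 (fun w => hv0 w (mem_univ w))
      have h4 := hv0 v (mem_univ v)
      have h5 := le_abs_self (C v0)
      have h6 : |C v0| ≤ ∑ x, |C x| :=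
        single_le_sum (f := fun x => |C x|) (fun w _ => abs_nonneg _) (mem_univ v0)
      omega)
    ⟨_, f0, ⟨rfl, hf0⟩, rfl⟩
  refine ⟨f, hf, fun U hqU hU => ?_⟩
  by_contra! hcon
  set f' : V → ℤ := fun v => f v + if v ∈ U then 0 else 1 with hf'
  have hle := hmax (∑ v, f' v) ⟨f', ⟨by simp [hf', hqU, hfq], ?_⟩, rfl⟩
  · have h1 : ∑ v, f v < ∑ v, f' v := by
      obtain ⟨x, hx⟩ : ∃ x, x ∉ U := by
        by_contra! h; exact hU (eq_univ_iff_forall.2 h)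
      refine sum_lt_sum (fun v _ => ?_) ⟨x, mem_univ x, by simp [hf', hx]⟩
      simp only [hf']; split_ifs <;> omega
    omega
  · intro v hv
    by_cases hvU : v ∈ U
    · have : L a f v ≤ L a f' v := by
        refine sum_le_sum fun w _ => mul_le_mul_of_nonneg_left ?_ (ha v w)
        simp only [hf', hvU, if_true]; split_ifs <;> omega
      have := hf v hv
      omega
    · have h1 := hcon v hvU
      have : L a f' v = L a f v - ∑ w ∈ U, a v w := by
        unfold L
        have e : ∑ w ∈ U, a v w = ∑ w, if w ∈ U then a v w else 0 := by simp
        rw [e, ← sum_sub_distrib]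
        refine sum_congr rfl fun w _ => ?_
        simp only [hf', hvU, if_false]
        split_ifs <;> ring
      omega

lemma main (a : V → V → ℤ) (ha : ∀ v w, 0 ≤ a v w) (hs : ∀ v w, a v w = a w v)
    (hd : ∀ v, a v v = 0)
    (hc : ∀ v w, Relation.ReflTransGen (fun x y => 0 < a x y) v w) (q : V) (D : V → ℤ)
    (hD : 2 * ∑ v, D v = (∑ v, ∑ w, a v w) - 2 * Fintype.card V) :
    (∃ f, ∀ v, 0 ≤ D v + L a f v) ∨
      ∃ f, ∃ ρ : V → ℤ, Function.Injective ρ ∧ ∀ v, D v + L a f v = nu a ρ v := by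
  obtain ⟨f, h1, h2⟩ := exists_reduced a ha hs hc q D
  by_cases hq : 0 ≤ D q + L a f q
  · left
    refine ⟨f, fun v => ?_⟩
    by_cases hv : v = q
    · rw [hv]; exact hq
    · exact h1 v hv
  right
  obtain ⟨ρ, hinj, hρ⟩ := burn a (fun v => D v + L a f v) q (by omega) h2
  have hinj' : Function.Injective fun v => (ρ v : ℤ) := fun x y h => hinj (by simpa using h)
  refine ⟨f, fun v => (ρ v : ℤ), hinj', ?_⟩
  have h3 := sum_nu a hs hd _ hinj'
  have h4 : ∑ v, (D v + L a f v) = ∑ v, nu a (fun v => (ρ v : ℤ)) v := by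
    rw [sum_add_distrib, sum_L a hs]; omega
  have := (sum_eq_sum_iff_of_le (fun v _ => hρ v)).1 h4
  exact fun v => this v (mem_univ v)

end BNCore

namespace Multigraph
open Finset

/-- Adjacency weights. -/
def adjW (G : Multigraph) (v w : G.V) : ℤ := if v = w then 0 else (G.numEdges v w : ℤ)

lemma adjW_nonneg (G : Multigraph) (v w : G.V) : 0 ≤ G.adjW v w := by
  unfold adjW; split_ifs <;> simp

lemma numEdges_symm (G : Multigraph) (v w : G.V) : G.numEdges v w = G.numEdges w v := by
  unfold numEdges; congr 1; ext e; simp [or_comm]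

lemma adjW_symm (G : Multigraph) (v w : G.V) : G.adjW v w = G.adjW w v := by
  unfold adjW; rw [numEdges_symm]; simp [eq_comm]

lemma adjW_self (G : Multigraph) (v : G.V) : G.adjW v v = 0 := by simp [adjW]

lemma valency_eq (G : Multigraph) (v : G.V) :
    (G.valency v : ℤ) = ∑ w, G.adjW v w + 2 * (G.numLoops v : ℤ) := by
  have h1 : ∑ w, G.adjW v w = ∑ e : G.E, ∑ w,
      (if v ≠ w ∧ (G.ends e = (v, w) ∨ G.ends e = (w, v)) then (1 : ℤ) else 0) := by
    rw [sum_comm]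
    refine sum_congr rfl fun w _ => ?_
    unfold adjW numEdges
    by_cases h : v = w <;> simp [h]
  have h2 : (G.numLoops v : ℤ) = ∑ e : G.E, (if G.ends e = (v, v) then (1 : ℤ) else 0) := by
    unfold numLoops; simp
  rw [h1, h2, mul_sum, ← sum_add_distrib]
  unfold valency
  push_cast
  refine sum_congr rfl fun e _ => ?_
  obtain ⟨x, y⟩ := G.ends e
  simp only [Prod.mk.injEq]
  by_cases hx : x = v <;> by_cases hy : y = v
  · subst hx; subst hy
    rw [sum_eq_zero]
    · simp
    · intro w _
      rw [if_neg]
      rintro ⟨h, h' | h'⟩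
      · exact h h'.2
      · exact h h'.1
  · subst hx
    rw [sum_eq_single y]
    · simp [hy, Ne.symm hy]
    · intro w _ hw
      rw [if_neg]
      rintro ⟨h, h' | h'⟩
      · exact hw h'.2.symm
      · exact hy h'.2
    · simp
  · subst hy
    rw [sum_eq_single x]
    · simp [hx, Ne.symm hx]
    · intro w _ hw
      rw [if_neg]
      rintro ⟨h, h' | h'⟩
      · exact hx h'.1
      · exact hw h'.1.symm
    · simp
  · simp [hx, hy]

lemma sum_valency (G : Multigraph) : ∑ v, (G.valency v : ℤ) = 2 * (Fintype.card G.E : ℤ) := by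
  unfold valency
  push_cast
  rw [sum_comm]
  simp [sum_add_distrib]
  ring

lemma T_eq (G : Multigraph) (v w : G.V) :
    G.T v w = BNCore.L G.adjW (fun u => if u = v then 1 else 0) w := by
  unfold T inter BNCore.L
  by_cases h : v = w
  · subst h
    rw [if_pos rfl, valency_eq]
    have : ∑ u, G.adjW v u * ((if u = v then 1 else 0) - (if v = v then 1 else 0))
        = ∑ u, - G.adjW v u := by
      refine sum_congr rfl fun u _ => ?_
      by_cases hu : u = v
      · subst hu; simp [adjW_self]
      · simp [hu]
    rw [this, sum_neg_distrib]; ring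
  · rw [if_neg h]
    simp only [Ne.symm h, if_false, sub_zero, mul_ite, mul_one, mul_zero, sum_ite_eq', mem_univ,
      if_true]
    unfold adjW
    rw [if_neg (Ne.symm h), numEdges_symm]

lemma mem_Prin (G : Multigraph) (D : G.V → ℤ) :
    D ∈ G.Prin ↔ ∃ f : G.V → ℤ, ∀ v, D v = BNCore.L G.adjW f v := by
  constructor
  · intro h
    refine AddSubgroup.closure_induction ?_ ?_ ?_ ?_ h
    · rintro _ ⟨v, rfl⟩
      exact ⟨_, G.T_eq v⟩
    · exact ⟨0, fun v => by simp [BNCore.L]⟩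
    · rintro x y _ _ ⟨f, hf⟩ ⟨g, hg⟩
      refine ⟨f + g, fun v => ?_⟩
      rw [Pi.add_apply, hf, hg]
      unfold BNCore.L
      rw [← sum_add_distrib]
      exact sum_congr rfl fun w _ => by simp only [Pi.add_apply]; ring
    · rintro x _ ⟨f, hf⟩
      refine ⟨-f, fun v => ?_⟩
      rw [Pi.neg_apply, hf]
      unfold BNCore.L
      rw [← sum_neg_distrib]
      exact sum_congr rfl fun w _ => by simp only [Pi.neg_apply]; ring
  · rintro ⟨f, hf⟩
    have : D = ∑ v, f v • G.T v := by
      funext w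
      rw [hf, Finset.sum_apply]
      simp only [Pi.smul_apply, smul_eq_mul, T_eq]
      unfold BNCore.L
      simp_rw [mul_sum]
      rw [sum_comm]
      refine sum_congr rfl fun u _ => ?_
      have : ∀ x, f x * (G.adjW w u * ((if u = x then 1 else 0) - (if w = x then 1 else 0)))
        = G.adjW w u * ((if u = x then f x else 0) - (if w = x then f x else 0)) := by
        intro x; split_ifs <;> ring
      simp_rw [this]
      rw [← mul_sum, sum_sub_distrib]
      simp
    rw [this]
    exact AddSubgroup.sum_mem _ fun v _ => AddSubgroup.zsmul_mem _
      (AddSubgroup.subset_closure (Set.mem_range_self v)) _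

lemma adj_reach (G : Multigraph) (hG : G.Connected) (v w : G.V) :
    Relation.ReflTransGen (fun x y => 0 < G.adjW x y) v w := by
  induction hG.2 v w with
  | refl => exact .refl
  | @tail b c _ hbc ih =>
    by_cases h : b = c
    · exact h ▸ ih
    · refine ih.tail ?_
      obtain ⟨e, he⟩ := hbc
      simp only [adjW, h, if_false, numEdges]
      have : 0 < (univ.filter fun e : G.E => G.ends e = (b, c) ∨ G.ends e = (c, b)).card :=
        card_pos.2 ⟨e, by simpa using he⟩
      exact_mod_cast this

lemma degree_canonical (G : Multigraph) : degree G.canonical = 2 * G.genus - 2 := by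
  unfold degree canonical genus
  rw [sum_sub_distrib, sum_valency]
  simp
  ring

lemma rank_canonical (G : Multigraph) (hG : G.Connected) (hl : G.Loopless) :
    G.rank G.canonical = G.genus - 1 := by
  obtain ⟨q⟩ := hG.1
  have : Nonempty G.V := ⟨q⟩
  have ha := G.adjW_nonneg
  have hs := G.adjW_symm
  have hd := G.adjW_self
  have hc := G.adj_reach hG
  have hK : ∀ v, G.canonical v = ∑ w, G.adjW v w - 2 := by
    intro v
    unfold canonical
    rw [valency_eq]
    have : G.numLoops v = 0 := by
      unfold numLoops
      rw [card_eq_zero, filter_eq_empty_iff]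
      intro e _ he
      apply hl e
      rw [he]
    rw [this]; simp
  have hdeg := G.degree_canonical
  have hA : (∑ v, ∑ w, G.adjW v w) - 2 * Fintype.card G.V = 2 * G.genus - 2 := by
    rw [← hdeg]; unfold degree
    simp only [hK]
    rw [sum_sub_distrib]; simp; ring
  obtain ⟨ρ, hinj, hρ⟩ := BNCore.bfs G.adjW ha hs hc q
  have hinj' : Function.Injective fun v => (ρ v : ℤ) := fun x y h => hinj (by simpa using h)
  set n0 := BNCore.nu G.adjW (fun v => (ρ v : ℤ)) with hn0
  have hsum := BNCore.sum_nu G.adjW hs hd _ hinj'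
  rw [hA, ← hn0] at hsum
  have hg : 0 ≤ G.genus := by
    have : ∑ v, (if v = q then (-1 : ℤ) else 0) ≤ ∑ v, n0 v := sum_le_sum fun v _ => hρ v
    simp at this
    omega
  apply IsGreatest.csSup_eq
  constructor
  · by_cases h0 : G.genus = 0
    · left; omega
    right
    refine ⟨by omega, fun E hE hdE => ?_⟩
    have hdD : ∑ v, (G.canonical v - E v) = G.genus - 1 := by
      rw [sum_sub_distrib]
      unfold degree at hdeg hdE
      omega
    rcases BNCore.main G.adjW ha hs hd hc q (fun v => G.canonical v - E v)
      (by rw [hA, hdD]; ring) with ⟨f, hf⟩ | ⟨f, ρ', hi, hf⟩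
    · refine ⟨fun v => G.canonical v - E v + BNCore.L G.adjW f v, hf, ?_⟩
      have : G.canonical - E - (fun v => G.canonical v - E v + BNCore.L G.adjW f v)
          = - (fun v => BNCore.L G.adjW f v) := by
        funext v; simp
      rw [this]
      exact neg_mem ((G.mem_Prin _).2 ⟨f, fun _ => rfl⟩)
    · exfalso
      obtain ⟨v, hv⟩ := BNCore.nu_unwin G.adjW ha (fun v => - ρ' v) f
      have h1 := BNCore.nu_add G.adjW hd ρ' hi v
      rw [← hK] at h1
      have h2 : G.canonical v - E v + BNCore.L G.adjW f v = BNCore.nu G.adjW ρ' v := hf v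
      have h3 := hE v
      omega
  · rintro r (rfl | ⟨hr, h⟩)
    · omega
    by_contra! hlt
    obtain ⟨F, hF, hP⟩ := h (fun v => n0 v + if v = q then r - G.genus + 1 else 0)
      (by
        intro v
        have := hρ v
        simp only
        split_ifs at this ⊢ <;> omega)
      (by
        unfold degree
        rw [sum_add_distrib]
        simp
        omega)
    obtain ⟨f, hf⟩ := (G.mem_Prin _).1 hP
    obtain ⟨v, hv⟩ := BNCore.nu_unwin G.adjW ha (fun v => - (ρ v : ℤ)) (-f)
    have h1 := BNCore.nu_add G.adjW hd _ hinj' v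
    rw [← hK] at h1
    have h2 := hf v
    have h3 := hF v
    have h4 : BNCore.L G.adjW (-f) v = - BNCore.L G.adjW f v := by
      unfold BNCore.L
      rw [← sum_neg_distrib]
      exact sum_congr rfl fun w _ => by simp only [Pi.neg_apply]; ring
    simp only [Pi.sub_apply] at h2
    rw [← hn0] at h1
    split_ifs at h2 <;> omega

lemma subdivide_genus (G : Multigraph) (n : G.E → ℕ) : (G.subdivide n).genus = G.genus := by
  have h1 : Fintype.card (G.subdivide n).E = Fintype.card (Σ e : G.E, Fin (n e + 1)) :=
    Fintype.card_congr (Equiv.refl _)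
  have h2 : Fintype.card (G.subdivide n).V = Fintype.card (G.V ⊕ (Σ e : G.E, Fin (n e))) :=
    Fintype.card_congr (Equiv.refl _)
  unfold genus
  rw [h1, h2, Fintype.card_sum, Fintype.card_sigma, Fintype.card_sigma]
  simp only [Fintype.card_fin, sum_add_distrib]
  push_cast
  simp
  ring

lemma sub_ends1_inl (G : Multigraph) (n : G.E → ℕ) (e : G.E) (i : Fin (n e + 1)) (v : G.V) :
    ((G.subdivide n).ends ⟨e, i⟩).1 = Sum.inl v ↔ i = 0 ∧ (G.ends e).1 = v := by
  by_cases h : (i : ℕ) = 0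
  · have : i = 0 := Fin.ext h
    simp [subdivide, this]
  · have : i ≠ 0 := fun h' => h (by simp [h'])
    simp [subdivide, this]

lemma sub_ends2_inl (G : Multigraph) (n : G.E → ℕ) (e : G.E) (i : Fin (n e + 1)) (v : G.V) :
    ((G.subdivide n).ends ⟨e, i⟩).2 = Sum.inl v ↔ i = Fin.last (n e) ∧ (G.ends e).2 = v := by
  by_cases h : (i : ℕ) = n e
  · have : i = Fin.last (n e) := Fin.ext h
    simp [subdivide, this]
  · have : i ≠ Fin.last (n e) := fun h' => h (by simp [h'])
    simp [subdivide, this, h]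

lemma sub_ends1_inr (G : Multigraph) (n : G.E → ℕ) (x : Σ e : G.E, Fin (n e + 1)) (e : G.E)
    (j : Fin (n e)) :
    ((G.subdivide n).ends x).1 = Sum.inr ⟨e, j⟩ ↔ x = ⟨e, j.succ⟩ := by
  obtain ⟨e', i⟩ := x
  by_cases h : (i : ℕ) = 0
  · simp only [subdivide, h, dif_pos]
    constructor
    · intro h'; simp at h'
    · intro h'
      obtain ⟨rfl, h'⟩ := Sigma.mk.inj_iff.1 h'
      have := eq_of_heq h'
      subst this
      simp at h
  · simp only [subdivide, h, dif_neg, not_false_eq_true, Sum.inr.injEq]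
    constructor
    · intro h'
      obtain ⟨rfl, h'⟩ := Sigma.mk.inj_iff.1 h'
      have := eq_of_heq h'
      subst this
      congr 1
      ext
      simp
      omega
    · intro h'
      obtain ⟨rfl, h'⟩ := Sigma.mk.inj_iff.1 h'
      have := eq_of_heq h'
      subst this
      simp

lemma sub_ends2_inr (G : Multigraph) (n : G.E → ℕ) (x : Σ e : G.E, Fin (n e + 1)) (e : G.E)
    (j : Fin (n e)) :
    ((G.subdivide n).ends x).2 = Sum.inr ⟨e, j⟩ ↔ x = ⟨e, j.castSucc⟩ := by
  obtain ⟨e', i⟩ := x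
  by_cases h : (i : ℕ) = n e'
  · simp only [subdivide, h, dif_pos]
    constructor
    · intro h'; simp at h'
    · intro h'
      obtain ⟨rfl, h'⟩ := Sigma.mk.inj_iff.1 h'
      have := eq_of_heq h'
      subst this
      have := j.isLt
      simp at h
      omega
  · simp only [subdivide, h, dif_neg, not_false_eq_true, Sum.inr.injEq]
    constructor
    · intro h'
      obtain ⟨rfl, h'⟩ := Sigma.mk.inj_iff.1 h'
      have := eq_of_heq h'
      subst this
      congr 1
    · intro h'
      obtain ⟨rfl, h'⟩ := Sigma.mk.inj_iff.1 h'
      have := eq_of_heq h'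
      subst this
      simp

lemma ite_aux {p q : Prop} {_ : Decidable p} {_ : Decidable q} (h : p ↔ q) :
    (if p then 1 else 0 : ℕ) = if q then 1 else 0 := by
  by_cases hp : p
  · rw [if_pos hp, if_pos (h.1 hp)]
  · rw [if_neg hp, if_neg (fun hq => hp (h.2 hq))]

lemma sub_valency_inl (G : Multigraph) (n : G.E → ℕ) (v : G.V) :
    (G.subdivide n).valency (Sum.inl v) = G.valency v := by
  have h : (G.subdivide n).valency (Sum.inl v) = ∑ x : (Σ e : G.E, Fin (n e + 1)),
      ((if x.2 = 0 ∧ (G.ends x.1).1 = v then 1 else 0) +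
       (if x.2 = Fin.last (n x.1) ∧ (G.ends x.1).2 = v then 1 else 0)) := by
    unfold valency
    refine sum_congr rfl fun x _ => ?_
    obtain ⟨e, i⟩ := x
    exact congrArg₂ _ (ite_aux (G.sub_ends1_inl n e i v))
      (ite_aux (G.sub_ends2_inl n e i v))
  rw [h, Fintype.sum_sigma]
  unfold valency
  refine sum_congr rfl fun e _ => ?_
  rw [sum_add_distrib]
  congr 1
  · rw [sum_eq_single 0]
    · simp
    · intro i _ hi; simp [hi]
    · simp
  · rw [sum_eq_single (Fin.last (n e))]
    · simp
    · intro i _ hi; simp [hi]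
    · simp

lemma sub_valency_inr (G : Multigraph) (n : G.E → ℕ) (e : G.E) (j : Fin (n e)) :
    (G.subdivide n).valency (Sum.inr ⟨e, j⟩) = 2 := by
  have h : (G.subdivide n).valency (Sum.inr ⟨e, j⟩) = ∑ x : (Σ e : G.E, Fin (n e + 1)),
      ((if x = ⟨e, j.succ⟩ then 1 else 0) + (if x = ⟨e, j.castSucc⟩ then 1 else 0)) := by
    unfold valency
    refine sum_congr rfl fun x _ => ?_
    exact congrArg₂ _ (ite_aux (G.sub_ends1_inr n x e j))
      (ite_aux (G.sub_ends2_inr n x e j))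
  rw [h, sum_add_distrib]
  simp

lemma sub_canonical (G : Multigraph) (n : G.E → ℕ) :
    G.subdivMap n G.canonical = (G.subdivide n).canonical := by
  funext x
  obtain v | ⟨e, j⟩ := x
  · have := G.sub_valency_inl n v
    unfold canonical
    rw [this]
    rfl
  · have := G.sub_valency_inr n e j
    unfold canonical
    rw [this]
    rfl

lemma Adj.symm' {G : Multigraph} {v w : G.V} (h : G.Adj v w) : G.Adj w v := by
  obtain ⟨e, h⟩ := h
  exact ⟨e, h.symm⟩

lemma sub_connected (G : Multigraph) (hG : G.Connected) (n : G.E → ℕ) :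
    (G.subdivide n).Connected := by
  let R := Relation.ReflTransGen (G.subdivide n).Adj
  have hsymm : ∀ x y, R x y → R y x := by
    intro x y h
    induction h with
    | refl => exact .refl
    | tail _ hbc ih => exact .head hbc.symm' ih
  have hedge : ∀ x : (G.subdivide n).E,
      R ((G.subdivide n).ends x).1 ((G.subdivide n).ends x).2 := fun x =>
    Relation.ReflTransGen.single ⟨x, Or.inl rfl⟩
  -- every vertex in the interior of an edge is reached from its first endpoint
  have hin : ∀ (e : G.E) (k : ℕ) (hk : k < n e), R (Sum.inl (G.ends e).1) (Sum.inr ⟨e, ⟨k, hk⟩⟩) := by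
    intro e k
    induction k with
    | zero =>
      intro hk
      have h := hedge ⟨e, 0⟩
      rw [(G.sub_ends1_inl n e 0 _).2 ⟨rfl, rfl⟩,
        (G.sub_ends2_inr n ⟨e, 0⟩ e ⟨0, hk⟩).2 rfl] at h
      exact h
    | succ k ih =>
      intro hk
      have h := hedge ⟨e, ⟨k + 1, by omega⟩⟩
      rw [(G.sub_ends1_inr n ⟨e, ⟨k + 1, by omega⟩⟩ e ⟨k, by omega⟩).2 rfl,
        (G.sub_ends2_inr n ⟨e, ⟨k + 1, by omega⟩⟩ e ⟨k + 1, hk⟩).2 rfl] at h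
      exact (ih (by omega)).trans h
  have hend : ∀ e : G.E, R (Sum.inl (G.ends e).1) (Sum.inl (G.ends e).2) := by
    intro e
    have h := hedge ⟨e, Fin.last (n e)⟩
    rw [(G.sub_ends2_inl n e (Fin.last (n e)) _).2 ⟨rfl, rfl⟩] at h
    by_cases h0 : n e = 0
    · rw [(G.sub_ends1_inl n e (Fin.last (n e)) _).2 ⟨Fin.ext (by simp [h0]), rfl⟩] at h
      exact h
    · rw [(G.sub_ends1_inr n ⟨e, Fin.last (n e)⟩ e ⟨n e - 1, by omega⟩).2
        (by congr 1; ext; simp; omega)] at h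
      exact (hin e _ _).trans h
  have hV : ∀ v w : G.V, R (Sum.inl v) (Sum.inl w) := by
    intro v w
    induction hG.2 v w with
    | refl => exact .refl
    | tail _ hbc ih =>
      obtain ⟨e, he | he⟩ := hbc
      · have := hend e; rw [he] at this; exact ih.trans this
      · have := hend e; rw [he] at this; exact ih.trans (hsymm _ _ this)
  obtain ⟨q⟩ := hG.1
  have hq : ∀ x, R (Sum.inl q) x := by
    rintro (v | ⟨e, k, hk⟩)
    · exact hV q v
    · exact (hV q _).trans (hin e k hk)
  exact ⟨⟨Sum.inl q⟩, fun v w => (hsymm _ _ (hq v)).trans (hq w)⟩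

lemma sub_loopless (G : Multigraph) (n : G.E → ℕ)
    (hn : ∀ e, (G.ends e).1 = (G.ends e).2 → n e ≠ 0) : (G.subdivide n).Loopless := by
  rintro ⟨e, i⟩ h
  rcases h2 : ((G.subdivide n).ends ⟨e, i⟩).2 with v | ⟨e', j⟩
  · rw [h2] at h
    obtain ⟨h3, h4⟩ := (G.sub_ends1_inl n e i v).1 h
    obtain ⟨h5, h6⟩ := (G.sub_ends2_inl n e i v).1 h2
    apply hn e (h4.trans h6.symm)
    have := congrArg Fin.val (h3.symm.trans h5)
    simpa using this.symm
  · rw [h2] at h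
    have h3 := (G.sub_ends1_inr n ⟨e, i⟩ e' j).1 h
    have h4 := (G.sub_ends2_inr n ⟨e, i⟩ e' j).1 h2
    have h5 := h3.symm.trans h4
    simp [Fin.ext_iff] at h5

end Multigraph

open Multigraph in
/-- For a connected graph `G` of genus `g`, the canonical divisor
`K#_G = Σ_v (val(v) - 2) v` has degree `2g - 2` and rank `r#_G(K#_G) = g - 1`. -/
theorem canonical_divisor_degree_and_rank (G : Multigraph) (hG : G.Connected) :
    Multigraph.degree G.canonical = 2 * G.genus - 2 ∧
    G.rankSharp G.canonical = G.genus - 1 := by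
  refine ⟨G.degree_canonical, ?_⟩
  unfold rankSharp
  rw [sub_canonical]
  refine ((G.subdivide _).rank_canonical (G.sub_connected hG _) (G.sub_loopless _ ?_)).trans ?_
  · intro e he
    simp [he]
  · rw [subdivide_genus]
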